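/- For all η > 0, ρ² > 0 and x ∈ ℝ, the integral over s ∈ (0, ∞) of (2π ρ² s)^(−1/2) · exp(−x²/(2 ρ² s)) · exp(−(η/2)(s + 1/s)) with respect to s equals (η ρ²)^(−1/2) · exp(−√(η (η + x²/ρ²))). -/

import Mathlib

open MeasureTheory Real

/-! Completing the square, `p² t² + q² / t² = (p t - q / t)² + 2 p q`, turns the mixture integral
(after `s = t²`) into a Gaussian integral composed with `t ↦ p t - q / t`, which the
Cauchy–Schlömilch transformation removes: the substitution `u = p t - q / t`, an increasing
bijection from `(0, ∞)` onto `ℝ` for `p, q > 0`, produces the weight `p + q / t²`, and since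
`t ↦ q / (p t)` changes the sign of `u`, the two summands of this weight contribute equally for an
even integrand. -/

lemma hasDerivAt_mul_sub_div (p q : ℝ) {t : ℝ} (ht : t ≠ 0) :
    HasDerivAt (fun t ↦ p * t - q / t) (p + q / t ^ 2) t := by
  convert! ((hasDerivAt_id t).const_mul p).sub ((hasDerivAt_inv ht).const_mul q) using 1
  ring

lemma monotoneOn_mul_sub_div {p q : ℝ} (hp : 0 ≤ p) (hq : 0 ≤ q) :
    MonotoneOn (fun t ↦ p * t - q / t) (Set.Ioi 0) := by
  intro s hs t _ hst
  have : 0 < s := hs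
  dsimp only
  gcongr

lemma image_mul_sub_div_Ioi {p q : ℝ} (hp : 0 < p) (hq : 0 < q) :
    (fun t ↦ p * t - q / t) '' Set.Ioi 0 = Set.univ := by
  refine Set.eq_univ_of_forall fun u ↦ ?_
  have hdisc : √(u ^ 2 + 4 * p * q) ^ 2 = u ^ 2 + 4 * p * q := sq_sqrt (by positivity)
  have hroot : 0 < u + √(u ^ 2 + 4 * p * q) := by
    have : |u| < √(u ^ 2 + 4 * p * q) :=
      lt_sqrt_of_sq_lt (by rw [sq_abs]; exact lt_add_of_pos_right _ (by positivity))
    linarith [neg_abs_le u]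
  generalize √(u ^ 2 + 4 * p * q) = w at hdisc hroot
  refine ⟨(u + w) / (2 * p), div_pos hroot (by positivity), ?_⟩
  dsimp only
  field_simp
  linear_combination hdisc

section VectorValued

variable {E : Type*} [NormedAddCommGroup E] [NormedSpace ℝ E]

lemma integral_inv_sqrt_smul_Ioi (g : ℝ → E) :
    ∫ s in Set.Ioi 0, (√s)⁻¹ • g s = (2 : ℝ) • ∫ t in Set.Ioi 0, g (t ^ 2) := by
  rw [← integral_comp_rpow_Ioi_of_pos two_pos, ← integral_smul]
  refine setIntegral_congr_fun measurableSet_Ioi fun t (ht : 0 < t) ↦ ?_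
  norm_num [smul_smul, sqrt_sq ht.le, ht.ne']

lemma integral_div_sq_smul_comp_div_Ioi {c : ℝ} (hc : 0 < c) (g : ℝ → E) :
    ∫ t in Set.Ioi 0, (c / t ^ 2) • g (c / t) = ∫ t in Set.Ioi 0, g t := by
  have himage : (fun t ↦ c / t) '' Set.Ioi 0 = Set.Ioi 0 := by
    refine (Set.image_subset_iff.2 fun t ht ↦ div_pos hc ht).antisymm fun t ht ↦ ?_
    exact ⟨c / t, div_pos hc ht, div_div_cancel₀ hc.ne'⟩
  have hderiv (t : ℝ) (ht : t ∈ Set.Ioi 0) :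
      HasDerivWithinAt (fun t ↦ c / t) (-(c / t ^ 2)) (Set.Ioi 0) t := by
    simpa [div_eq_mul_inv] using ((hasDerivAt_inv (ne_of_gt ht)).const_mul c).hasDerivWithinAt
  have hanti : AntitoneOn (fun t ↦ c / t) (Set.Ioi 0) :=
    fun s hs t _ hst ↦ div_le_div_of_nonneg_left hc.le hs hst
  simpa [himage] using
    (integral_image_eq_integral_deriv_smul_of_antitoneOn measurableSet_Ioi hderiv hanti g).symm

lemma integral_eq_two_smul_integral_Ioi_of_even {f : ℝ → E} (hf : Integrable f)
    (heven : Function.Even f) : ∫ u, f u = (2 : ℝ) • ∫ u in Set.Ioi 0, f u := by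
  have hneg : ∫ u in Set.Iic 0, f u = ∫ u in Set.Ioi 0, f u := by
    simpa [heven _] using (integral_comp_neg_Ioi 0 f).symm
  rw [← intervalIntegral.integral_Iic_add_Ioi hf.integrableOn hf.integrableOn, hneg, two_smul]

lemma integral_add_div_sq_smul_comp_mul_sub_div_Ioi {p q : ℝ} (hp : 0 < p) (hq : 0 < q)
    (f : ℝ → E) :
    ∫ t in Set.Ioi 0, (p + q / t ^ 2) • f (p * t - q / t) = ∫ u, f u := by
  rw [← integral_image_eq_integral_deriv_smul_of_monotoneOn measurableSet_Ioi
    (fun t ht ↦ (hasDerivAt_mul_sub_div p q (ne_of_gt ht)).hasDerivWithinAt)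
    (monotoneOn_mul_sub_div hp.le hq.le), image_mul_sub_div_Ioi hp hq, setIntegral_univ]

lemma integrableOn_add_div_sq_smul_comp_mul_sub_div_Ioi {p q : ℝ} (hp : 0 ≤ p) (hq : 0 ≤ q)
    {f : ℝ → E} (hf : Integrable f) :
    IntegrableOn (fun t ↦ (p + q / t ^ 2) • f (p * t - q / t)) (Set.Ioi 0) := by
  rw [← integrableOn_image_iff_integrableOn_deriv_smul_of_monotoneOn measurableSet_Ioi
    (fun t ht ↦ (hasDerivAt_mul_sub_div p q (ne_of_gt ht)).hasDerivWithinAt)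
    (monotoneOn_mul_sub_div hp hq)]
  exact hf.integrableOn

lemma integrableOn_comp_mul_sub_div_Ioi {p q : ℝ} (hp : 0 < p) (hq : 0 ≤ q) {f : ℝ → E}
    (hf : Integrable f) : IntegrableOn (fun t ↦ f (p * t - q / t)) (Set.Ioi 0) := by
  have hbound (t : ℝ) : ‖(p + q / t ^ 2)⁻¹‖ ≤ p⁻¹ := by
    rw [norm_of_nonneg (by positivity)]
    gcongr
    exact le_add_of_nonneg_right (by positivity)
  have hmeas : Measurable fun t : ℝ ↦ (p + q / t ^ 2)⁻¹ := by fun_prop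
  refine ((integrableOn_add_div_sq_smul_comp_mul_sub_div_Ioi hp.le hq hf).bdd_smul p⁻¹
    hmeas.aestronglyMeasurable (ae_of_all _ hbound)).congr (ae_of_all _ fun t ↦ ?_)
  exact inv_smul_smul₀ (by positivity) _

lemma integral_div_sq_smul_comp_mul_sub_div_Ioi_of_even {p q : ℝ} (hp : 0 < p) (hq : 0 < q)
    {f : ℝ → E} (heven : Function.Even f) :
    ∫ t in Set.Ioi 0, (q / t ^ 2) • f (p * t - q / t) =
      p • ∫ t in Set.Ioi 0, f (p * t - q / t) := by
  have hreflect (t : ℝ) (ht : 0 < t) :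
      (q / t ^ 2) • f (p * t - q / t) =
        (q / p / t ^ 2) • p • f (p * (q / p / t) - q / (q / p / t)) := by
    have harg : p * (q / p / t) - q / (q / p / t) = -(p * t - q / t) := by
      field_simp
      ring
    have hweight : q / p / t ^ 2 * p = q / t ^ 2 := by field_simp
    rw [harg, heven, smul_smul, hweight]
  rw [setIntegral_congr_fun measurableSet_Ioi hreflect,
    integral_div_sq_smul_comp_div_Ioi (div_pos hq hp) fun t ↦ p • f (p * t - q / t), integral_smul]

theorem integral_comp_mul_sub_div_Ioi_of_even {p q : ℝ} (hp : 0 < p) (hq : 0 ≤ q) {f : ℝ → E}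
    (hf : Integrable f) (heven : Function.Even f) :
    ∫ t in Set.Ioi 0, f (p * t - q / t) = p⁻¹ • ∫ u in Set.Ioi 0, f u := by
  rcases hq.eq_or_lt with rfl | hq
  · simpa using integral_comp_mul_left_Ioi f 0 hp
  set I := ∫ t in Set.Ioi 0, f (p * t - q / t)
  have hhalf : p • I = (2 : ℝ) • (∫ u in Set.Ioi 0, f u) - p • I :=
    calc p • I = ∫ t in Set.Ioi 0, (q / t ^ 2) • f (p * t - q / t) :=
          (integral_div_sq_smul_comp_mul_sub_div_Ioi_of_even hp hq heven).symm
      _ = ∫ t in Set.Ioi 0, ((p + q / t ^ 2) • f (p * t - q / t) - p • f (p * t - q / t)) := by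
          simp only [← sub_smul, add_sub_cancel_left]
      _ = (2 : ℝ) • (∫ u in Set.Ioi 0, f u) - p • I := by
          rw [integral_sub (integrableOn_add_div_sq_smul_comp_mul_sub_div_Ioi hp.le hq.le hf)
            ((integrableOn_comp_mul_sub_div_Ioi hp hq.le hf).fun_smul p), integral_smul,
            integral_add_div_sq_smul_comp_mul_sub_div_Ioi hp hq,
            integral_eq_two_smul_integral_Ioi_of_even hf heven]
  rw [eq_sub_iff_add_eq, ← two_smul ℝ] at hhalf
  rw [eq_inv_smul_iff₀ hp.ne']
  exact smul_right_injective E two_ne_zero hhalf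

end VectorValued

theorem integral_inv_sqrt_mul_exp_neg_Ioi {a b : ℝ} (ha : 0 < a) (hb : 0 ≤ b) :
    ∫ s in Set.Ioi 0, (√s)⁻¹ * rexp (-(a * s + b / s)) = √(π / a) * rexp (-(2 * √(a * b))) := by
  have hsquare (t : ℝ) (ht : 0 < t) :
      rexp (-(a * t ^ 2 + b / t ^ 2)) =
        rexp (-(2 * √(a * b))) * rexp (-1 * (√a * t - √b / t) ^ 2) := by
    rw [← exp_add, sqrt_mul ha.le]
    congr 1
    rw [sub_sq, mul_pow, div_pow, sq_sqrt ha.le, sq_sqrt hb]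
    field_simp
    ring
  have heven : Function.Even fun u : ℝ ↦ rexp (-1 * u ^ 2) := fun u ↦ by simp only [neg_sq]
  calc ∫ s in Set.Ioi 0, (√s)⁻¹ * rexp (-(a * s + b / s))
      = 2 * ∫ t in Set.Ioi 0, rexp (-(a * t ^ 2 + b / t ^ 2)) :=
        integral_inv_sqrt_smul_Ioi fun s ↦ rexp (-(a * s + b / s))
    _ = 2 * (rexp (-(2 * √(a * b))) *
          ∫ t in Set.Ioi 0, rexp (-1 * (√a * t - √b / t) ^ 2)) := by
        rw [setIntegral_congr_fun measurableSet_Ioi hsquare, integral_const_mul]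
    _ = 2 * (rexp (-(2 * √(a * b))) * ((√a)⁻¹ * (√(π / 1) / 2))) := by
        rw [integral_comp_mul_sub_div_Ioi_of_even (sqrt_pos.2 ha) (sqrt_nonneg b)
          (integrable_exp_neg_mul_sq one_pos) heven, integral_gaussian_Ioi, smul_eq_mul]
    _ = √(π / a) * rexp (-(2 * √(a * b))) := by
        rw [div_one, sqrt_div pi_pos.le]
        ring

lemma rpow_neg_one_div_two_eq_inv_sqrt {y : ℝ} (hy : 0 ≤ y) : y ^ (-(1 : ℝ) / 2) = (√y)⁻¹ := by
  rw [neg_div, rpow_neg hy, sqrt_eq_rpow]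

theorem normal_gig_mixture_general (ψ χ ρ2 x : ℝ) (hψ : 0 < ψ) (hχ : 0 ≤ χ) (hρ : 0 < ρ2) :
    ∫ s in Set.Ioi (0 : ℝ),
        (2 * π * ρ2 * s) ^ (-(1 : ℝ) / 2) * rexp (-x ^ 2 / (2 * ρ2 * s))
          * rexp (-(ψ * s + χ / s) / 2)
      = (ψ * ρ2) ^ (-(1 : ℝ) / 2) * rexp (-√(ψ * (χ + x ^ 2 / ρ2))) := by
  have hintegrand (s : ℝ) (hs : 0 < s) :
      (2 * π * ρ2 * s) ^ (-(1 : ℝ) / 2) * rexp (-x ^ 2 / (2 * ρ2 * s))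
          * rexp (-(ψ * s + χ / s) / 2)
        = (√(2 * π * ρ2))⁻¹ *
          ((√s)⁻¹ * rexp (-(ψ / 2 * s + (χ + x ^ 2 / ρ2) / 2 / s))) := by
    rw [rpow_neg_one_div_two_eq_inv_sqrt (by positivity), sqrt_mul (by positivity), mul_inv,
      mul_assoc, ← exp_add, mul_assoc]
    congr 3
    field_simp
    ring
  have hconst : (√(2 * π * ρ2))⁻¹ * √(π / (ψ / 2)) = (√(ψ * ρ2))⁻¹ := by
    rw [← sqrt_inv, ← sqrt_inv, ← sqrt_mul (by positivity)]
    congr 1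
    field_simp
  have hexponent : 2 * √(ψ / 2 * ((χ + x ^ 2 / ρ2) / 2)) = √(ψ * (χ + x ^ 2 / ρ2)) := by
    rw [div_mul_div_comm, sqrt_div' _ (by norm_num), sqrt_mul_self two_pos.le]
    ring
  rw [setIntegral_congr_fun measurableSet_Ioi hintegrand, integral_const_mul,
    integral_inv_sqrt_mul_exp_neg_Ioi (by positivity) (by positivity), ← mul_assoc, hconst,
    hexponent, rpow_neg_one_div_two_eq_inv_sqrt (by positivity)]

/-- Mixing a `N(0, ρ² s)` density over the unnormalized `GIG(1, η, η)` kernel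
produces the unnormalized hyperbolic kernel. -/
theorem normal_gig_mixture (η ρ2 x : ℝ) (hη : 0 < η) (hρ : 0 < ρ2) :
    ∫ s in Set.Ioi (0 : ℝ),
        (2 * π * ρ2 * s) ^ (-(1 : ℝ) / 2) * Real.exp (-x ^ 2 / (2 * ρ2 * s))
          * Real.exp (-(η / 2) * (s + 1 / s))
      = (η * ρ2) ^ (-(1 : ℝ) / 2)
          * Real.exp (-Real.sqrt (η * (η + x ^ 2 / ρ2))) := by
  have hkernel (s : ℝ) : -(η / 2) * (s + 1 / s) = -(η * s + η / s) / 2 := by ring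
  simpa only [hkernel] using normal_gig_mixture_general η η ρ2 x hη hη.le hρ
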